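/- arXiv:2407.20770 — 5 statements merged into one kernel-verified Lean document; each statement's English description precedes it below -/
import Mathlib

section
/- Let $A$ be an $n\times n$ real matrix with nonnegative entries whose associated directed graph (with an edge from $j$ to $i$ whenever $A[i,j] > 0$) is strongly connected, and let $\gamma_1,\dots,\gamma_p$ be strictly positive reals. Then the directed graph associated with the $np\times np$ block matrix $\tilde{A}$ (with an edge from $(k,j)$ to $(l,i)$ whenever $\tilde{A}[(l,i),(k,j)] > 0$) is strongly connected: for every pair of indices $(l,i)$ and $(k,j)$ there exists $m \ge 1$ with $(\tilde{A}^m)[(l,i),(k,j)] > 0$. -/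
/-- If the directed graph of the nonnegative matrix `A` is strongly
connected (for every `i j` there is `m ≥ 1` with `(A^m) i j > 0`) and all
`γ l > 0`, then the directed graph of the block matrix `At` is strongly
connected. -/
theorem stmt2 {n p : ℕ} (A : Matrix (Fin n) (Fin n) ℝ) (γ : Fin p → ℝ)
    (hA0 : ∀ i j, 0 ≤ A i j)
    (hconn : ∀ i j : Fin n, ∃ m : ℕ, 1 ≤ m ∧ 0 < (A ^ m) i j)
    (hγ : ∀ l, 0 < γ l)
    (At : Matrix (Fin p × Fin n) (Fin p × Fin n) ℝ)
    (hAt : ∀ li kj, At li kj =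
      if kj.1 = li.1 then γ li.1 * A li.2 kj.2
      else if kj.2 = li.2 then γ kj.1 else 0) :
    ∀ a b : Fin p × Fin n, ∃ m : ℕ, 1 ≤ m ∧ 0 < (At ^ m) a b := by
  have h0 : ∀ a b, 0 ≤ At a b := by
    intro a b
    rw [hAt]
    split_ifs
    · exact mul_nonneg (hγ _).le (hA0 _ _)
    · exact (hγ _).le
    · exact le_rfl
  have hp0 : ∀ m a b, 0 ≤ (At ^ m) a b := by
    intro m
    induction m with
    | zero =>
      intro a b
      rw [pow_zero, Matrix.one_apply]
      split_ifs <;> norm_num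
    | succ m ih =>
      intro a b
      rw [pow_succ, Matrix.mul_apply]
      exact Finset.sum_nonneg fun c _ => mul_nonneg (ih _ _) (h0 _ _)
  have key : ∀ m l i j, γ l ^ m * (A ^ m) i j ≤ (At ^ m) (l, i) (l, j) := by
    intro m
    induction m with
    | zero =>
      intro l i j
      simp [Matrix.one_apply]
    | succ m ih =>
      intro l i j
      rw [pow_succ, pow_succ, pow_succ, Matrix.mul_apply, Matrix.mul_apply,
        Fintype.sum_prod_type, Finset.mul_sum]
      refine le_trans ?_ (Finset.single_le_sum
        (f := fun k => ∑ c, (At ^ m) (l, i) (k, c) * At (k, c) (l, j))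
        (fun k _ => Finset.sum_nonneg fun c _ => mul_nonneg (hp0 _ _ _) (h0 _ _))
        (Finset.mem_univ l))
      refine Finset.sum_le_sum fun c _ => ?_
      have h1 : At (l, c) (l, j) = γ l * A c j := by simp [hAt]
      have h2 := mul_le_mul_of_nonneg_right (ih l i c) (h0 (l, c) (l, j))
      rw [h1] at h2 ⊢
      calc _ = γ l ^ m * (A ^ m) i c * (γ l * A c j) := by ring
        _ ≤ _ := h2
  rintro ⟨l, i⟩ ⟨k, j⟩
  obtain ⟨m, hm, hpos⟩ := hconn i j
  have hk : 0 < (At ^ m) (k, i) (k, j) :=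
    lt_of_lt_of_le (mul_pos (pow_pos (hγ k) m) hpos) (key m k i j)
  by_cases hkl : k = l
  · subst hkl
    exact ⟨m, hm, hk⟩
  · refine ⟨m + 1, by omega, ?_⟩
    rw [pow_succ', Matrix.mul_apply]
    refine Finset.sum_pos' (fun c _ => mul_nonneg (h0 _ _) (hp0 _ _ _))
      ⟨(k, i), Finset.mem_univ _, mul_pos ?_ hk⟩
    have h1 : At (l, i) (k, i) = γ k := by simp [hAt, hkl]
    rw [h1]
    exact hγ k
end

section
/- Let $A$ be an $n\times n$ row-stochastic matrix whose associated directed graph (edge from $j$ to $i$ whenever $A[i,j]>0$) is strongly connected and which has at least one strictly positive diagonal entry, and let $\gamma_1,\dots,\gamma_p$ be strictly positive reals summing to $1$. Then the $np\times np$ block matrix $\tilde{A}$ is primitive: there exists $m \ge 1$ such that every entry of $\tilde{A}^m$ is strictly positive. -/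
lemma nn_pow_aux {ι : Type*} [Fintype ι] [DecidableEq ι] (M : Matrix ι ι ℝ)
    (h : ∀ i j, 0 ≤ M i j) (m : ℕ) : ∀ i j, 0 ≤ (M ^ m) i j := by
  induction m with
  | zero =>
    intro i j
    rw [pow_zero, Matrix.one_apply]
    split_ifs <;> norm_num
  | succ k ih =>
    intro i j
    rw [pow_succ, Matrix.mul_apply]
    exact Finset.sum_nonneg fun x _ => mul_nonneg (ih _ _) (h _ _)

lemma pos_trans_aux {ι : Type*} [Fintype ι] [DecidableEq ι] (M : Matrix ι ι ℝ)
    (h : ∀ i j, 0 ≤ M i j) {m k : ℕ} {a b c : ι} (h1 : 0 < (M ^ m) a b)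
    (h2 : 0 < (M ^ k) b c) : 0 < (M ^ (m + k)) a c := by
  rw [pow_add, Matrix.mul_apply]
  exact Finset.sum_pos' (fun x _ => mul_nonneg (nn_pow_aux M h _ _ _) (nn_pow_aux M h _ _ _))
    ⟨b, Finset.mem_univ _, mul_pos h1 h2⟩

/-- If `A` is row-stochastic, its directed graph is strongly
connected, it has a strictly positive diagonal entry, and all `γ l > 0` with
`∑ γ l = 1`, then the block matrix `At` is primitive: some power of `At` has
all entries strictly positive. -/
theorem stmt3 {n p : ℕ} (A : Matrix (Fin n) (Fin n) ℝ) (γ : Fin p → ℝ)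
    (hA0 : ∀ i j, 0 ≤ A i j) (hA1 : ∀ i, ∑ j, A i j = 1)
    (hconn : ∀ i j : Fin n, ∃ m : ℕ, 1 ≤ m ∧ 0 < (A ^ m) i j)
    (hdiag : ∃ i0 : Fin n, 0 < A i0 i0)
    (hγ : ∀ l, 0 < γ l) (hγ1 : ∑ l, γ l = 1)
    (At : Matrix (Fin p × Fin n) (Fin p × Fin n) ℝ)
    (hAt : ∀ li kj, At li kj =
      if kj.1 = li.1 then γ li.1 * A li.2 kj.2
      else if kj.2 = li.2 then γ kj.1 else 0) :
    ∃ m : ℕ, 1 ≤ m ∧ ∀ a b : Fin p × Fin n, 0 < (At ^ m) a b := by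
  obtain ⟨i0, hi0⟩ := hdiag
  have h0 : ∀ a b, 0 ≤ At a b := by
    intro a b
    rw [hAt]
    split_ifs
    · exact mul_nonneg (hγ _).le (hA0 _ _)
    · exact (hγ _).le
    · exact le_rfl
  have hlayer : ∀ (m : ℕ) (l : Fin p) (i j : Fin n), 0 < (A ^ m) i j →
      0 < (At ^ m) (l, i) (l, j) := by
    intro m l
    induction m with
    | zero =>
      intro i j h
      by_cases hij : i = j
      · subst hij; simp
      · simp [Matrix.one_apply, hij] at h
    | succ k ih =>
      intro i j h
      rw [pow_succ, Matrix.mul_apply] at h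
      obtain ⟨x, -, hx⟩ := Finset.exists_lt_of_sum_lt
        (s := Finset.univ) (f := fun _ : Fin n => (0 : ℝ)) (by simpa using h)
      have hx1 : 0 < (A ^ k) i x :=
        lt_of_le_of_ne (nn_pow_aux A hA0 _ _ _) (by rintro e; simp [← e] at hx)
      have hx2 : 0 < A x j := lt_of_le_of_ne (hA0 _ _) (by rintro e; simp [← e] at hx)
      refine pos_trans_aux At h0 (ih i x hx1) ?_
      rw [pow_one, hAt]
      simpa using mul_pos (hγ l) hx2
  have hloop : ∀ (k : ℕ) (l : Fin p), 0 < (At ^ k) (l, i0) (l, i0) := by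
    intro k l
    induction k with
    | zero => simp
    | succ k ih => exact pos_trans_aux At h0 ih (hlayer 1 l i0 i0 (by simpa using hi0))
  have key : ∀ ab : (Fin p × Fin n) × (Fin p × Fin n), ∃ N : ℕ, ∀ m, N ≤ m →
      0 < (At ^ m) ab.1 ab.2 := by
    rintro ⟨⟨l, i⟩, ⟨k, j⟩⟩
    obtain ⟨m1, -, h1⟩ := hconn i i0
    obtain ⟨m2, -, h2⟩ := hconn i0 j
    have h3 : ∃ r, 0 < (At ^ r) (l, j) (k, j) := by
      by_cases hkl : k = l
      · subst hkl; exact ⟨0, by simp⟩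
      · exact ⟨1, by rw [pow_one, hAt]; simpa [hkl] using hγ k⟩
    obtain ⟨r, h3⟩ := h3
    refine ⟨m1 + m2 + r, fun m hm => ?_⟩
    have := pos_trans_aux At h0 (pos_trans_aux At h0 (pos_trans_aux At h0 (hlayer m1 l i i0 h1)
      (hloop (m - (m1 + m2 + r)) l)) (hlayer m2 l i0 j h2)) h3
    have e : m1 + (m - (m1 + m2 + r)) + m2 + r = m := by omega
    rwa [e] at this
  choose N hN using key
  refine ⟨Finset.univ.sup N + 1, by omega, fun a b => hN (a, b) _ ?_⟩
  exact (Finset.le_sup (Finset.mem_univ (a, b))).trans (Nat.le_succ _)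
end

section
/- (Lemma 2) Let $A$ be an $n\times n$ real matrix and let $\pi \in \mathbb{R}^n$ be a row vector with $\pi A = \pi$ and $\sum_{i=1}^n \pi_i = 1$. Let $\gamma_1,\dots,\gamma_p$ be reals with $\sum_{l=1}^p \gamma_l = 1$. Define the $np$-dimensional row vector $\tilde{\pi}$ by $\tilde{\pi}_{(l,i)} = \gamma_l \pi_i$. Then $\tilde{\pi}\tilde{A} = \tilde{\pi}$ and $\sum_{l,i} \tilde{\pi}_{(l,i)} = 1$; i.e., $\tilde{\pi}$ is the normalized left eigenvector of $\tilde{A}$ associated with eigenvalue $1$. -/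
/-- Lemma 2: If `π A = π`, `∑ π i = 1`, and `∑ γ l = 1`, then the
row vector `πt` with `πt (l,i) = γ l * π i` satisfies `πt ⬝ At = πt` and
`∑ πt = 1`; i.e., `πt` is the normalized left eigenvector of `At` for
eigenvalue `1`. -/
theorem stmt4 {n p : ℕ} (A : Matrix (Fin n) (Fin n) ℝ) (γ : Fin p → ℝ)
    (π : Fin n → ℝ)
    (hπA : ∀ j, ∑ i, π i * A i j = π j) (hπ1 : ∑ i, π i = 1)
    (hγ1 : ∑ l, γ l = 1)
    (At : Matrix (Fin p × Fin n) (Fin p × Fin n) ℝ)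
    (hAt : ∀ li kj, At li kj =
      if kj.1 = li.1 then γ li.1 * A li.2 kj.2
      else if kj.2 = li.2 then γ kj.1 else 0)
    (πt : Fin p × Fin n → ℝ) (hπt : ∀ li, πt li = γ li.1 * π li.2) :
    (∀ b : Fin p × Fin n, ∑ a, πt a * At a b = πt b) ∧ ∑ a, πt a = 1 := by
  constructor
  · rintro ⟨k, j⟩
    have key : ∀ l : Fin p, ∑ i, πt (l, i) * At (l, i) (k, j) = γ l * (γ k * π j) := by
      intro l
      simp only [hπt, hAt]
      by_cases h : k = l
      · subst h
        simp only [if_true]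
        rw [← hπA j, Finset.mul_sum, Finset.mul_sum]
        refine Finset.sum_congr rfl fun i _ => ?_
        ring
      · simp only [h, if_false, mul_ite, mul_zero, Finset.sum_ite_eq, Finset.mem_univ, if_true]
        ring
    rw [Fintype.sum_prod_type, Finset.sum_congr rfl fun l _ => key l, ← Finset.sum_mul, hγ1,
      one_mul, hπt]
  · simp only [hπt, Fintype.sum_prod_type, ← Finset.mul_sum, hπ1, mul_one, hγ1]
end

section
/- Let $(M_k)_{k\ge 1}$ be a sequence of $d\times d$ real matrices converging entrywise to a matrix $B$, and let $(L_k)_{k\ge 1}$ be a sequence of vectors in $\mathbb{R}^d$ such that the Cesàro averages $\frac{1}{t}\sum_{k=1}^t L_k$ converge to a vector $K \in \mathbb{R}^d$ and $\sup_{t\ge 1} \frac{1}{t}\sum_{k=1}^t \|L_k\| < \infty$. Then $\lim_{t\to\infty} \frac{1}{t}\sum_{k=1}^{t} M_k L_{t+1-k} = BK$. -/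
open Filter

lemma aux_div (l : ℕ → ℝ) (κ : ℝ)
    (h : Tendsto (fun t : ℕ => (1 / (t : ℝ)) * ∑ k ∈ Finset.Icc 1 t, l k) atTop (nhds κ)) :
    Tendsto (fun t : ℕ => |l t| / (t : ℝ)) atTop (nhds 0) := by
  rw [← tendsto_add_atTop_iff_nat 1]
  have h1 := (tendsto_add_atTop_iff_nat 1).2 h
  have h2 := h1.sub (h.mul (tendsto_natCast_div_add_atTop (1 : ℝ)))
  have h3 := h2.abs
  simp only [mul_one, sub_self, abs_zero] at h3
  refine h3.congr' ?_
  filter_upwards [eventually_ge_atTop 1] with t ht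
  have ht' : (0 : ℝ) < t := by exact_mod_cast ht
  have h0 : (0 : ℝ) < (t : ℝ) + 1 := by positivity
  rw [Finset.sum_Icc_succ_top (by omega)]
  push_cast
  rw [← abs_of_pos h0, ← abs_div, abs_of_pos h0]
  congr 1
  field_simp
  ring

lemma aux_reflect (f : ℕ → ℝ) (t : ℕ) :
    ∑ k ∈ Finset.Icc 1 t, f (t + 1 - k) = ∑ k ∈ Finset.Icc 1 t, f k := by
  refine Finset.sum_nbij' (fun k => t + 1 - k) (fun k => t + 1 - k) ?_ ?_ ?_ ?_ ?_ <;>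
    simp only [Finset.mem_Icc] <;> intros <;> first | omega | trivial

lemma aux_zero (e l : ℕ → ℝ) (C : ℝ) (he : Tendsto e atTop (nhds 0))
    (hl : Tendsto (fun t : ℕ => |l t| / (t : ℝ)) atTop (nhds 0))
    (hC : ∀ t : ℕ, 1 ≤ t → (1 / (t : ℝ)) * ∑ k ∈ Finset.Icc 1 t, |l k| ≤ C) :
    Tendsto (fun t : ℕ => (1 / (t : ℝ)) * ∑ k ∈ Finset.Icc 1 t, e k * l (t + 1 - k))
      atTop (nhds 0) := by
  have hC0 : 0 ≤ C := le_trans (by positivity) (hC 1 le_rfl)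
  have hk : ∀ k : ℕ, 1 ≤ k →
      Tendsto (fun t : ℕ => |l (t + 1 - k)| / (t : ℝ)) atTop (nhds 0) := by
    intro k hk
    have hs : Tendsto (fun t : ℕ => t + 1 - k) atTop atTop :=
      tendsto_atTop.2 fun b => by
        filter_upwards [eventually_ge_atTop (b + k)] with t ht
        omega
    refine squeeze_zero' (Eventually.of_forall fun t => by positivity) ?_ (hl.comp hs)
    filter_upwards [eventually_ge_atTop k] with t ht
    have h1 : ((t + 1 - k : ℕ) : ℝ) ≤ t := by exact_mod_cast (by omega)
    have h2 : (0 : ℝ) < ((t + 1 - k : ℕ) : ℝ) := by exact_mod_cast (by omega)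
    exact div_le_div_of_nonneg_left (abs_nonneg _) h2 h1
  rw [Metric.tendsto_atTop]
  intro ε hε
  set δ := ε / (2 * (C + 1)) with hδ
  have hδ0 : 0 < δ := by positivity
  obtain ⟨N, hN⟩ := Metric.tendsto_atTop.1 he δ hδ0
  have hF : Tendsto (fun t : ℕ => ∑ k ∈ Finset.Icc 1 N, |e k| * (|l (t + 1 - k)| / (t : ℝ)))
      atTop (nhds 0) := by
    have := tendsto_finsetSum (Finset.Icc 1 N) (fun k hk' =>
      (hk k (Finset.mem_Icc.1 hk').1).const_mul |e k|)
    simpa using this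
  obtain ⟨T, hT⟩ := Metric.tendsto_atTop.1 hF (ε / 2) (by positivity)
  refine ⟨max T 1, fun t ht => ?_⟩
  have hT' := hT t (le_trans (le_max_left _ _) ht)
  have ht1 : 1 ≤ t := le_trans (le_max_right _ _) ht
  have ht' : (0 : ℝ) < t := by exact_mod_cast ht1
  rw [Real.dist_eq, sub_zero] at hT' ⊢
  have hT2 := (le_abs_self _).trans_lt hT'
  have hb : ∀ k ∈ Finset.Icc 1 t, |e k * l (t + 1 - k)| ≤
      (if k ≤ N then |e k| * |l (t + 1 - k)| else 0) + δ * |l (t + 1 - k)| := by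
    intro k _
    rw [abs_mul]
    split_ifs with hkN
    · have : 0 ≤ δ * |l (t + 1 - k)| := by positivity
      linarith
    · have := hN k (by omega)
      rw [Real.dist_eq, sub_zero] at this
      rw [zero_add]
      gcongr
  have hsum : |∑ k ∈ Finset.Icc 1 t, e k * l (t + 1 - k)| ≤
      ∑ k ∈ Finset.Icc 1 N, |e k| * |l (t + 1 - k)| + δ * ∑ k ∈ Finset.Icc 1 t, |l k| := by
    refine (Finset.abs_sum_le_sum_abs _ _).trans ((Finset.sum_le_sum hb).trans ?_)
    rw [Finset.sum_add_distrib, ← Finset.mul_sum, aux_reflect (fun k => |l k|),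
      ← Finset.sum_filter]
    gcongr
    intro k
    simp only [Finset.mem_filter, Finset.mem_Icc]
    omega
  rw [abs_mul, abs_of_pos (by positivity : (0 : ℝ) < 1 / t)]
  have hfin : 1 / (t : ℝ) * ∑ k ∈ Finset.Icc 1 N, |e k| * |l (t + 1 - k)| =
      ∑ k ∈ Finset.Icc 1 N, |e k| * (|l (t + 1 - k)| / (t : ℝ)) := by
    rw [Finset.mul_sum]
    exact Finset.sum_congr rfl fun k _ => by ring
  have hδC : δ * C < ε / 2 := by
    rw [hδ, div_mul_eq_mul_div, div_lt_div_iff₀ (by positivity) (by positivity)]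
    nlinarith
  calc _ ≤ 1 / (t : ℝ) * (∑ k ∈ Finset.Icc 1 N, |e k| * |l (t + 1 - k)|
            + δ * ∑ k ∈ Finset.Icc 1 t, |l k|) := by gcongr
    _ = ∑ k ∈ Finset.Icc 1 N, |e k| * (|l (t + 1 - k)| / (t : ℝ))
          + δ * (1 / (t : ℝ) * ∑ k ∈ Finset.Icc 1 t, |l k|) := by rw [← hfin]; ring
    _ ≤ ∑ k ∈ Finset.Icc 1 N, |e k| * (|l (t + 1 - k)| / (t : ℝ)) + δ * C := by
        gcongr
        exact hC t ht1
    _ < ε := by linarith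

lemma aux_scalar (m l : ℕ → ℝ) (b κ C : ℝ) (hm : Tendsto m atTop (nhds b))
    (h : Tendsto (fun t : ℕ => (1 / (t : ℝ)) * ∑ k ∈ Finset.Icc 1 t, l k) atTop (nhds κ))
    (hC : ∀ t : ℕ, 1 ≤ t → (1 / (t : ℝ)) * ∑ k ∈ Finset.Icc 1 t, |l k| ≤ C) :
    Tendsto (fun t : ℕ => (1 / (t : ℝ)) * ∑ k ∈ Finset.Icc 1 t, m k * l (t + 1 - k))
      atTop (nhds (b * κ)) := by
  have he : Tendsto (fun k => m k - b) atTop (nhds 0) := by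
    simpa using hm.sub_const b
  have h1 := (aux_zero _ l C he (aux_div l κ h) hC).add (h.const_mul b)
  rw [zero_add] at h1
  refine h1.congr fun t => ?_
  rw [← aux_reflect l t]
  simp only [sub_mul, Finset.sum_sub_distrib, ← Finset.mul_sum]
  ring

/-- If the matrices `M k` converge entrywise to `B`, the Cesàro
averages of the vectors `L k` converge to `K`, and the Cesàro averages of
`‖L k‖` are bounded, then `(1/t) ∑_{k=1}^t (M k).mulVec (L (t+1-k)) → B.mulVec K`. -/
theorem stmt10 {d : ℕ} (M : ℕ → Matrix (Fin d) (Fin d) ℝ)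
    (B : Matrix (Fin d) (Fin d) ℝ)
    (hM : ∀ a b, Tendsto (fun k => M k a b) atTop (nhds (B a b)))
    (L : ℕ → Fin d → ℝ) (K : Fin d → ℝ)
    (hCes : Tendsto (fun t : ℕ => (1 / (t : ℝ)) • ∑ k ∈ Finset.Icc 1 t, L k)
      atTop (nhds K))
    (hBdd : ∃ C : ℝ, ∀ t : ℕ, 1 ≤ t →
      (1 / (t : ℝ)) * ∑ k ∈ Finset.Icc 1 t, ‖L k‖ ≤ C) :
    Tendsto (fun t : ℕ =>
        (1 / (t : ℝ)) • ∑ k ∈ Finset.Icc 1 t, (M k).mulVec (L (t + 1 - k)))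
      atTop (nhds (B.mulVec K)) := by
  obtain ⟨C, hC⟩ := hBdd
  rw [tendsto_pi_nhds] at hCes ⊢
  intro i
  have key : ∀ j : Fin d, Tendsto (fun t : ℕ =>
      (1 / (t : ℝ)) * ∑ k ∈ Finset.Icc 1 t, M k i j * L (t + 1 - k) j)
      atTop (nhds (B i j * K j)) := by
    intro j
    refine aux_scalar (fun k => M k i j) (fun k => L k j) _ _ C (hM i j) ?_ ?_
    · simpa [Finset.sum_apply] using hCes j
    · intro t ht
      refine le_trans ?_ (hC t ht)
      gcongr with k _
      exact norm_le_pi_norm (L k) j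
  have := tendsto_finsetSum Finset.univ (fun j _ => key j)
  refine this.congr fun t => ?_
  simp only [Pi.smul_apply, Finset.sum_apply, Matrix.mulVec, dotProduct, smul_eq_mul]
  rw [Finset.sum_comm, Finset.mul_sum]
end

section
/- Let $M$ be a $d\times d$ real matrix such that $M^k$ converges entrywise to a matrix $B$ as $k\to\infty$. Let $\nu_0 \in \mathbb{R}^d$ and $(L_t)_{t\ge 1}$ be vectors in $\mathbb{R}^d$ with $\frac{1}{t}\sum_{k=1}^t L_k \to K$ and $\sup_{t\ge 1}\frac{1}{t}\sum_{k=1}^t\|L_k\| < \infty$, and define $\nu_{t+1} = M\nu_t + L_{t+1}$ for $t \ge 0$. Then $\lim_{t\to\infty} \frac{1}{t}\nu_t = BK$. -/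
open Filter

lemma aux_sum {E : Type*} [AddCommMonoid E] (f : ℕ → E) (t : ℕ) :
    ∑ k ∈ Finset.range t, f (t - k) = ∑ k ∈ Finset.Icc 1 t, f k := by
  induction t with
  | zero => simp
  | succ t ih =>
    rw [Finset.sum_range_succ', Finset.sum_Icc_succ_top (by omega), ← ih]
    simp

lemma aux_real (a l : ℕ → ℝ) (ha0 : ∀ n, 0 ≤ a n) (hl0 : ∀ n, 0 ≤ l n)
    (ha : Tendsto a atTop (nhds 0))
    (hl : Tendsto (fun n : ℕ => (1 / (n : ℝ)) * l n) atTop (nhds 0))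
    (C : ℝ) (hC : ∀ t : ℕ, 1 ≤ t → (1 / (t : ℝ)) * ∑ k ∈ Finset.Icc 1 t, l k ≤ C) :
    Tendsto (fun t : ℕ => (1 / (t : ℝ)) * ∑ k ∈ Finset.range t, a k * l (t - k))
      atTop (nhds 0) := by
  have hC0 : 0 ≤ C := le_trans (by have := hl0 1; simpa using this) (hC 1 le_rfl)
  obtain ⟨A, hA⟩ := ha.bddAbove_range
  have hA' : ∀ n, a n ≤ A := fun n => hA ⟨n, rfl⟩
  have hA0 : 0 ≤ A := (ha0 0).trans (hA' 0)
  have hshift : ∀ k : ℕ, Tendsto (fun t : ℕ => (1 / (t : ℝ)) * l (t - k)) atTop (nhds 0) := by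
    intro k
    refine squeeze_zero' (Eventually.of_forall fun t => mul_nonneg (by positivity) (hl0 _)) ?_
      (hl.comp (tendsto_sub_atTop_nat k))
    filter_upwards [eventually_gt_atTop k] with t ht
    have h1 : (0 : ℝ) < ((t - k : ℕ) : ℝ) := by exact_mod_cast (by omega : 0 < t - k)
    have h2 : ((t - k : ℕ) : ℝ) ≤ (t : ℝ) := by exact_mod_cast Nat.sub_le t k
    exact mul_le_mul_of_nonneg_right (one_div_le_one_div_of_le h1 h2) (hl0 _)
  rw [Metric.tendsto_atTop']
  intro ε hε
  have hδ : 0 < ε / (2 * (C + 1)) := by positivity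
  obtain ⟨N, hN⟩ := eventually_atTop.1 (ha.eventually_le_const hδ)
  have hs : Tendsto (fun t : ℕ => A * ∑ k ∈ Finset.range N, (1 / (t : ℝ)) * l (t - k))
      atTop (nhds 0) := by
    have := (tendsto_finsetSum (Finset.range N) (fun k _ => hshift k)).const_mul A
    simpa using this
  obtain ⟨T, hT⟩ := eventually_atTop.1 (hs.eventually_lt_const (half_pos hε))
  refine ⟨T + N + 1, fun t ht => ?_⟩
  have hnn : 0 ≤ (1 / (t : ℝ)) * ∑ k ∈ Finset.range t, a k * l (t - k) :=
    mul_nonneg (by positivity) (Finset.sum_nonneg fun k _ => mul_nonneg (ha0 _) (hl0 _))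
  rw [Real.dist_eq, sub_zero, abs_of_nonneg hnn]
  have hsplit : ∑ k ∈ Finset.range t, a k * l (t - k) ≤
      ε / (2 * (C + 1)) * ∑ k ∈ Finset.Icc 1 t, l k + A * ∑ k ∈ Finset.range N, l (t - k) := by
    rw [← aux_sum]
    have hNt : Finset.range N ⊆ Finset.range t := Finset.range_mono (by omega)
    rw [← Finset.sum_sdiff hNt]
    gcongr ?_ + ?_
    · calc _ ≤ ∑ k ∈ Finset.range t \ Finset.range N, ε / (2 * (C + 1)) * l (t - k) := by
            refine Finset.sum_le_sum fun k hk => mul_le_mul_of_nonneg_right (hN k ?_) (hl0 _)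
            simp at hk
            exact hk.2
        _ ≤ ∑ k ∈ Finset.range t, ε / (2 * (C + 1)) * l (t - k) :=
            Finset.sum_le_sum_of_subset_of_nonneg Finset.sdiff_subset
              fun k _ _ => mul_nonneg hδ.le (hl0 _)
        _ = _ := by rw [Finset.mul_sum]
    · rw [Finset.mul_sum]
      exact Finset.sum_le_sum fun k hk => mul_le_mul_of_nonneg_right (hA' k) (hl0 _)
  have h1 := hT t (by omega)
  have h2 := hC t (by omega)
  rw [← Finset.mul_sum] at h1
  have h3 : ε / (2 * (C + 1)) * ((1 / (t : ℝ)) * ∑ k ∈ Finset.Icc 1 t, l k) ≤ ε / 2 := by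
    calc _ ≤ ε / (2 * (C + 1)) * (C + 1) := by gcongr; linarith
      _ = ε / 2 := by field_simp
  calc _ ≤ (1 / (t : ℝ)) * (ε / (2 * (C + 1)) * ∑ k ∈ Finset.Icc 1 t, l k
          + A * ∑ k ∈ Finset.range N, l (t - k)) := by gcongr
    _ = ε / (2 * (C + 1)) * ((1 / (t : ℝ)) * ∑ k ∈ Finset.Icc 1 t, l k)
          + A * ((1 / (t : ℝ)) * ∑ k ∈ Finset.range N, l (t - k)) := by ring
    _ < ε := by linarith

lemma aux_mulVec {d : ℕ} (X : Matrix (Fin d) (Fin d) ℝ) (v : Fin d → ℝ) :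
    ‖X.mulVec v‖ ≤ (∑ a, ∑ b, |X a b|) * ‖v‖ := by
  rw [pi_norm_le_iff_of_nonneg (by positivity)]
  intro a
  calc ‖X.mulVec v a‖ ≤ ∑ b, ‖X a b * v b‖ := by
        simp only [Matrix.mulVec, dotProduct]
        exact norm_sum_le _ _
    _ ≤ ∑ b, |X a b| * ‖v‖ := by
        refine Finset.sum_le_sum fun b _ => ?_
        rw [norm_mul]
        exact mul_le_mul_of_nonneg_left (norm_le_pi_norm v b) (norm_nonneg _)
    _ = (∑ b, |X a b|) * ‖v‖ := by rw [Finset.sum_mul]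
    _ ≤ _ := by
        refine mul_le_mul_of_nonneg_right ?_ (norm_nonneg _)
        exact Finset.single_le_sum (f := fun a => ∑ b, |X a b|)
          (fun i _ => Finset.sum_nonneg fun _ _ => abs_nonneg _) (Finset.mem_univ a)


/-- If `M^k → B` entrywise, the Cesàro averages of `(L k)`
converge to `K` with bounded Cesàro averages of norms, and
`ν (t+1) = M.mulVec (ν t) + L (t+1)`, then `(1/t) • ν t → B.mulVec K`. -/
theorem stmt11 {d : ℕ} (M B : Matrix (Fin d) (Fin d) ℝ)
    (hM : ∀ a b, Tendsto (fun k => (M ^ k) a b) atTop (nhds (B a b)))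
    (ν0 : Fin d → ℝ) (L : ℕ → Fin d → ℝ) (K : Fin d → ℝ)
    (hCes : Tendsto (fun t : ℕ => (1 / (t : ℝ)) • ∑ k ∈ Finset.Icc 1 t, L k)
      atTop (nhds K))
    (hBdd : ∃ C : ℝ, ∀ t : ℕ, 1 ≤ t →
      (1 / (t : ℝ)) * ∑ k ∈ Finset.Icc 1 t, ‖L k‖ ≤ C)
    (ν : ℕ → Fin d → ℝ) (h0 : ν 0 = ν0)
    (hrec : ∀ t : ℕ, ν (t + 1) = M.mulVec (ν t) + L (t + 1)) :
    Tendsto (fun t : ℕ => (1 / (t : ℝ)) • ν t) atTop (nhds (B.mulVec K)) := by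
  obtain ⟨C, hC⟩ := hBdd
  have hinv : Tendsto (fun t : ℕ => 1 / (t : ℝ)) atTop (nhds 0) :=
    tendsto_one_div_atTop_nhds_zero_nat
  -- individual terms are o(t)
  have hl : Tendsto (fun n : ℕ => (1 / (n : ℝ)) * ‖L n‖) atTop (nhds 0) := by
    rw [← tendsto_add_atTop_iff_nat 1]
    have h1 := (tendsto_add_atTop_iff_nat 1).2 hCes
    have hr : Tendsto (fun n : ℕ => (n : ℝ) / ((n : ℝ) + 1)) atTop (nhds 1) :=
      tendsto_natCast_div_add_atTop 1
    have h2 := (h1.sub (hr.smul hCes)).norm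
    rw [one_smul, sub_self, norm_zero] at h2
    refine h2.congr' ?_
    filter_upwards [eventually_gt_atTop 0] with n hn
    have hn' : (n : ℝ) ≠ 0 := by positivity
    rw [Finset.sum_Icc_succ_top (by omega), smul_smul,
      show (n : ℝ) / ((n : ℝ) + 1) * (1 / (n : ℝ)) = 1 / ((n + 1 : ℕ) : ℝ) by
        push_cast; field_simp, ← smul_sub, add_sub_cancel_left, norm_smul,
      Real.norm_of_nonneg (by positivity)]
  have hmv : Continuous fun v : Fin d → ℝ => B.mulVec v := by fun_prop
  have ha : Tendsto (fun k : ℕ => ∑ a, ∑ b, |(M ^ k - B) a b|) atTop (nhds 0) := by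
    have : Tendsto (fun k : ℕ => ∑ a, ∑ b, |(M ^ k) a b - B a b|) atTop
        (nhds (∑ a : Fin d, ∑ b : Fin d, |B a b - B a b|)) :=
      tendsto_finsetSum _ fun a _ => tendsto_finsetSum _ fun b _ =>
        ((hM a b).sub_const _).abs
    simpa using this
  have hsol : ∀ t, ν t = (M ^ t).mulVec ν0
      + ∑ k ∈ Finset.range t, (M ^ k).mulVec (L (t - k)) := by
    intro t
    induction t with
    | zero => simp [h0]
    | succ t ih =>
      rw [hrec, ih, Finset.sum_range_succ', Matrix.mulVec_add, Matrix.mulVec_mulVec,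
        Matrix.mulVec_sum]
      simp [Matrix.mulVec_mulVec, ← pow_succ', add_assoc]
  have hpow : Tendsto (fun t : ℕ => (M ^ t).mulVec ν0) atTop (nhds (B.mulVec ν0)) := by
    rw [tendsto_pi_nhds]
    intro a
    simp only [Matrix.mulVec, dotProduct]
    exact tendsto_finsetSum _ fun b _ => (hM a b).mul_const _
  have hT1 : Tendsto (fun t : ℕ => (1 / (t : ℝ)) • (M ^ t).mulVec ν0) atTop (nhds 0) := by
    simpa using hinv.smul hpow
  have hT2 : Tendsto (fun t : ℕ => B.mulVec ((1 / (t : ℝ)) • ∑ k ∈ Finset.Icc 1 t, L k))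
      atTop (nhds (B.mulVec K)) := (hmv.tendsto K).comp hCes
  have hT3 : Tendsto (fun t : ℕ => (1 / (t : ℝ)) •
      ∑ k ∈ Finset.range t, (M ^ k - B).mulVec (L (t - k))) atTop (nhds 0) := by
    refine squeeze_zero_norm (fun t => ?_)
      (aux_real _ (fun n => ‖L n‖) (fun n => by positivity) (fun n => norm_nonneg _) ha hl C hC)
    rw [norm_smul, Real.norm_of_nonneg (by positivity)]
    refine mul_le_mul_of_nonneg_left ?_ (by positivity)
    exact (norm_sum_le _ _).trans (Finset.sum_le_sum fun k _ => aux_mulVec _ _)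
  have hfin := (hT1.add hT2).add hT3
  rw [zero_add, add_zero] at hfin
  refine hfin.congr fun t => ?_
  rw [hsol t, ← aux_sum, Matrix.mulVec_smul, Matrix.mulVec_sum, ← smul_add, ← smul_add,
    add_assoc, ← Finset.sum_add_distrib]
  congr 2
  refine Finset.sum_congr rfl fun k _ => ?_
  rw [← Matrix.add_mulVec, add_sub_cancel]
end
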